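/- Let X ⊆ Y be nonempty finite sets of jobs (with sizes in (0, g(m)]). Then for every job J ∈ X, r̃(X)(J) ≥ r̃(Y)(J); that is, the cost charged to each job is non-increasing as the job set expands. -/

import Mathlib

open scoped Classical
open Finset MeasureTheory

namespace BSHM

noncomputable section

/-- The set of candidate parents of machine type `i`: types `j ∈ M` with `j > i`
and a strictly smaller normalized cost rate per capacity unit. -/
def pset (m : ℕ) (g r : ℕ → ℝ) (i : ℕ) : Set ℕ :=
  {j | j ≤ m ∧ i < j ∧ r j / g j < r i / g i}

/-- The parent `p i` of machine type `i` (equal to `0` when the parent is undefined,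
since any actual parent has index `≥ 2`). -/
def p (m : ℕ) (g r : ℕ → ℝ) (i : ℕ) : ℕ := sInf (pset m g r i)

/-- `pdef i` asserts that the parent of `i` is defined. -/
def pdef (m : ℕ) (g r : ℕ → ℝ) (i : ℕ) : Prop := (pset m g r i).Nonempty

/-- One step of the parent relation: `b` is the (defined) parent of `a`. -/
def pstep (m : ℕ) (g r : ℕ → ℝ) (a b : ℕ) : Prop :=
  pdef m g r a ∧ b = p m g r a

/-- `P i`: the set consisting of `i` together with all of its iterated parents. -/
def P (m : ℕ) (g r : ℕ → ℝ) (i : ℕ) : Set ℕ :=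
  {z | Relation.ReflTransGen (pstep m g r) i z}

/-- `A i`: the set of nodes in the tree rooted at `i`,
i.e. all `z ∈ M` having `i` as an ancestor (or equal to `i`). -/
def A (m : ℕ) (g r : ℕ → ℝ) (i : ℕ) : Set ℕ :=
  {z | 1 ≤ z ∧ z ≤ m ∧ i ∈ P m g r z}

/-- `v i`: the lowest-indexed node in the tree rooted at `i`. -/
def v (m : ℕ) (g r : ℕ → ℝ) (i : ℕ) : ℕ := sInf (A m g r i)

/-- `y i`: the younger siblings of `i` (same parent status, smaller index). -/
def y (m : ℕ) (g r : ℕ → ℝ) (i : ℕ) : Set ℕ :=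
  {z | 1 ≤ z ∧ z ≤ m ∧ z < i ∧ p m g r z = p m g r i}

/-- `esib i`: the elder siblings of `i`. -/
def esib (m : ℕ) (g r : ℕ → ℝ) (i : ℕ) : Set ℕ :=
  {z | 1 ≤ z ∧ z ≤ m ∧ i < z ∧ p m g r z = p m g r i}

/-- `T k := {k} ∪ ⋃_{z ∈ P(k)} y(z)`. -/
def T (m : ℕ) (g r : ℕ → ℝ) (k : ℕ) : Set ℕ :=
  {k} ∪ ⋃ z ∈ P m g r k, y m g r z

/-- `T k` as a `Finset` (all relevant nodes lie in `{k} ∪ [1, m]`). -/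
def TIcc (m : ℕ) (g r : ℕ → ℝ) (k : ℕ) : Finset ℕ :=
  (insert k (Finset.Icc 1 m)).filter (fun z => z ∈ T m g r k)

/-! ### Jobs and one-shot scheduling -/

variable {ι : Type*}

/-- The exact machine type of a job `J`: the least `z ∈ M` with `s J ≤ g z`. -/
def mty (m : ℕ) (g : ℕ → ℝ) (s : ι → ℝ) (J : ι) : ℕ :=
  sInf {z | 1 ≤ z ∧ z ≤ m ∧ s J ≤ g z}

/-- Total size of a finite set of jobs. -/
def Ssum (s : ι → ℝ) (W : Finset ι) : ℝ := ∑ J ∈ W, s J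

/-- `k0f X`: the highest-indexed exact machine type among the jobs of `X`. -/
def k0f (m : ℕ) (g : ℕ → ℝ) (s : ι → ℝ) (X : Finset ι) : ℕ :=
  X.sup (fun J => mty m g s J)

/-- `H z X`: the jobs of `X` whose exact machine type lies in the tree rooted at `z`. -/
def H (m : ℕ) (g r : ℕ → ℝ) (s : ι → ℝ) (z : ℕ) (X : Finset ι) : Finset ι :=
  X.filter (fun J => mty m g s J ∈ A m g r z)

/-- `SH X z := S(H_z(X))`. -/
def SH (m : ℕ) (g r : ℕ → ℝ) (s : ι → ℝ) (X : Finset ι) (z : ℕ) : ℝ :=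
  Ssum s (H m g r s z X)

/-- Feasibility of a machine configuration `w : M → ℕ` for the job set `X`. -/
def Feasible (m : ℕ) (g : ℕ → ℝ) (s : ι → ℝ) (X : Finset ι) (w : ℕ → ℕ) : Prop :=
  ∀ i, 1 ≤ i → i ≤ m →
    Ssum s (X.filter (fun J => i ≤ mty m g s J)) ≤ ∑ z ∈ Finset.Icc i m, (w z : ℝ) * g z

/-- The cost of a machine configuration. -/
def cost (m : ℕ) (r : ℕ → ℝ) (w : ℕ → ℕ) : ℝ :=
  ∑ z ∈ Finset.Icc 1 m, (w z : ℝ) * r z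

/-- The optimal one-shot scheduling cost for a job set `X`. -/
def OPT1 (m : ℕ) (g r : ℕ → ℝ) (s : ι → ℝ) (X : Finset ι) : ℝ :=
  sInf {c : ℝ | ∃ w : ℕ → ℕ, Feasible m g s X w ∧ c = cost m r w}

/-- The fractional machine configuration `cn_{z*}` for the job set `X`, with
highest-indexed machine type `zs`.  A node `i ∈ T(zs) \ {zs}` is the boundary
type `i*` exactly when `∑_{z ∈ T(zs), z > i} S(H_z) ≤ cn(zs)·g(zs) <
∑_{z ∈ T(zs), z ≥ i} S(H_z)`; nodes above the boundary get `0`,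
nodes below it get `S(H_i)/g_i`. -/
def cn (m : ℕ) (g r : ℕ → ℝ) (s : ι → ℝ) (X : Finset ι) (zs i : ℕ) : ℝ :=
  let B : ℝ := (⌈SH m g r s X zs / g zs⌉₊ : ℝ) * g zs
  let Sge : ℝ := ∑ z ∈ (TIcc m g r zs).filter (fun z => i ≤ z), SH m g r s X z
  let Sgt : ℝ := ∑ z ∈ (TIcc m g r zs).filter (fun z => i < z), SH m g r s X z
  if i = zs then (⌈SH m g r s X zs / g zs⌉₊ : ℝ)
  else if i ∈ T m g r zs then
    (if Sgt ≤ B ∧ B < Sge then (Sge - B) / g i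
     else if B < Sgt then SH m g r s X i / g i
     else 0)
  else 0

/-- `cn_{zs}` is decent: for every strict ancestor `zt` of `zs`, the total cost of
the machines of types in `T(zs) ∩ A(zt)` is at most the cost of one type-`zt` machine. -/
def decent (m : ℕ) (g r : ℕ → ℝ) (s : ι → ℝ) (X : Finset ι) (zs : ℕ) : Prop :=
  ∀ zt ∈ P m g r zs, zt ≠ zs →
    (∑ z ∈ (TIcc m g r zs).filter (fun z => z ∈ A m g r zt), cn m g r s X zs z * r z) ≤ r zt

/-- `z⋄(X)`: the least `z* ∈ P(k0(X))` such that `cn_{z*}` is decent. -/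
def zdia (m : ℕ) (g r : ℕ → ℝ) (s : ι → ℝ) (X : Finset ι) : ℕ :=
  sInf {zs | zs ∈ P m g r (k0f m g s X) ∧ decent m g r s X zs}

/-- The child of `zd` whose subtree contains node `k`. -/
def chil (m : ℕ) (g r : ℕ → ℝ) (zd k : ℕ) : ℕ :=
  sInf {i | p m g r i = zd ∧ k ∈ A m g r i}

/-- The node `i ∈ T(zd)` whose subtree contains node `k`. -/
def idxT (m : ℕ) (g r : ℕ → ℝ) (zd k : ℕ) : ℕ :=
  sInf {i | i ∈ T m g r zd ∧ k ∈ A m g r i}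

/-- The children `f(zd)` of node `zd`, as a `Finset`. -/
def fchFin (m : ℕ) (g r : ℕ → ℝ) (zd : ℕ) : Finset ℕ :=
  (Finset.Icc 1 m).filter (fun z => p m g r z = zd)

/-- The cost `r̃(X)(J)` charged to the job `J` of the job set `X`. -/
def charge (m : ℕ) (g r : ℕ → ℝ) (s : ι → ℝ) (X : Finset ι) (J : ι) : ℝ :=
  let zd := zdia m g r s X
  let ρ : ℕ → ℝ := fun i => r i / g i
  let Hh := X.filter (fun J' => mty m g s J' = zd)
  let c : ℝ := Ssum s Hh * ρ zd + ∑ i ∈ fchFin m g r zd, SH m g r s X i * ρ i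
  if mty m g s J ∈ A m g r zd then
    if g zd ≤ SH m g r s X zd then s J * ρ zd
    else if r zd < c then
      if mty m g s J = zd then s J * ρ zd
      else
        s J * (ρ (chil m g r zd (mty m g s J)) -
          (ρ (chil m g r zd (mty m g s J)) - ρ zd) *
            ((c - r zd) /
              (∑ i ∈ fchFin m g r zd, ∑ J' ∈ H m g r s i X, s J' * (ρ i - ρ zd))))
    else
      if mty m g s J = zd then s J * ρ zd * (1 + (r zd - c) / (Ssum s Hh * ρ zd))
      else s J * ρ (chil m g r zd (mty m g s J))
  else s J * ρ (idxT m g r zd (mty m g s J))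

end

end BSHM

namespace BSHM

/-!
Both `P` and `T` are read off the rates `r / g`: `P k` is the set of strict record lows of the rate
from `k` on, and `T n` is the set of weak suffix minima of the rate on `[1, n]`. Every type
`k ≤ n` therefore has exactly one ancestor in `T n`, namely its last ancestor `≤ n`, and the rate of
this ancestor decreases as `n` grows.

*Monotonicity of `z⋄`.* Let `n = z⋄(Y)` and let `c` be the last ancestor `≤ n` of `k0(X)`. Then
`T c ⊆ T n`, and the capacity which `cn^X_c` places on types `≥ i` is, for every `i`, at most the
one `cn^Y_n` places there. As the rate is monotone on `T n`, summation by parts shows that `cn^X_c`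
is the cheaper configuration on every subtree, so that it inherits decency from `cn^Y_n` and
`z⋄(X) ≤ c ≤ n`.

*Comparison of charges.* A job is charged at least the rate of its last ancestor `≤ z⋄` and, unless
it has exact type `z⋄`, at most that of its last ancestor `< z⋄`; this settles
`z⋄(X) < z⋄(Y)`. If `z⋄(X) = z⋄(Y)`, the charges depend on the job set only through `α*`, which
grows with it, and `β*`, which shrinks.
-/

/-! ### Sums and inequalities -/

/-- Summation by parts, in the form of an induction which removes the least index. -/
lemma sum_mul_le_sum_mul_of_tail_sum_le {α R : Type*} [LinearOrder α] [CommRing R] [LinearOrder R]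
    [IsStrictOrderedRing R] {S : Finset α} {u w q : α → R} (hq : MonotoneOn q S)
    (hq0 : ∀ i ∈ S, 0 ≤ q i)
    (htail : ∀ i ∈ S, ∑ j ∈ S with i ≤ j, u j ≤ ∑ j ∈ S with i ≤ j, w j) :
    ∑ j ∈ S, u j * q j ≤ ∑ j ∈ S, w j * q j := by
  suffices h : ∀ t, (∀ i ∈ S, t ≤ q i) → t * ∑ j ∈ S, (w j - u j) ≤ ∑ j ∈ S, (w j - u j) * q j by
    simpa [sub_mul, sum_sub_distrib] using h 0 hq0
  clear hq0
  induction S using Finset.induction_on_min with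
  | empty => simp
  | insert a S hlt ih =>
    intro t ht
    have haS : a ∉ S := fun h => (hlt a h).false
    have htailS : ∀ i ∈ S, ∑ j ∈ S with i ≤ j, u j ≤ ∑ j ∈ S with i ≤ j, w j := by
      intro i hi
      simpa only [filter_insert, (hlt i hi).not_ge, if_false] using htail i (mem_insert_of_mem hi)
    have hS := ih (hq.mono (by simp)) htailS (q a)
      fun i hi => hq (by simp) (by simp [hi]) (hlt i hi).le
    have htotal : 0 ≤ ∑ j ∈ insert a S, (w j - u j) := by
      have h := htail a (mem_insert_self a S)
      rwa [filter_true_of_mem (by simpa using fun i hi => (hlt i hi).le), ← sub_nonneg,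
        ← sum_sub_distrib] at h
    have hta := mul_le_mul_of_nonneg_right (ht a (mem_insert_self a S)) htotal
    refine hta.trans ?_
    rw [sum_insert haS, sum_insert haS, mul_add, mul_comm (q a)]
    exact add_le_add_right hS _

lemma sum_filter_le_eq_ite_add {M : Type*} [AddCommMonoid M] (S : Finset ℕ) (f : ℕ → M) (i : ℕ) :
    ∑ z ∈ S with i ≤ z, f z = (if i ∈ S then f i else 0) + ∑ z ∈ S with i + 1 ≤ z, f z := by
  simp only [sum_filter, ← sum_ite_eq' S i f, ← sum_add_distrib]
  refine sum_congr rfl fun z _ => ?_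
  rcases lt_trichotomy z i with h | rfl | h
  · simp [h.ne, h.not_ge, h.not_gt]
  · simp
  · simp [h.ne', h.le, h]

lemma pos_of_forall_lt {α : Type*} [Zero α] [Preorder α] {m : ℕ} {q : ℕ → α} (h1 : 0 < q 1)
    (hlt : ∀ i j, 1 ≤ i → i < j → j ≤ m → q i < q j) : ∀ i ∈ Set.Icc 1 m, 0 < q i := by
  rintro i ⟨hi1, him⟩
  rcases hi1.eq_or_lt with rfl | hi
  · exact h1
  · exact h1.trans (hlt 1 i le_rfl hi him)

lemma sub_div_sub_le_sub_div_sub {K : Type*} [Field K] [LinearOrder K]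
    [IsStrictOrderedRing K] {a a' b c c' : K} (ha : a ≤ a') (ha' : a' ≤ b) (hb : b < c)
    (hc : c ≤ c') : (c - b) / (c - a) ≤ (c' - b) / (c' - a') := by
  rw [div_le_div_iff₀ (by linarith) (by linarith)]
  calc (c - b) * (c' - a') ≤ (c - b) * (c' - a) := by gcongr
    _ = (c' - b) * (c - a) - (c' - c) * (b - a) := by ring
    _ ≤ (c' - b) * (c - a) :=
        sub_le_self _ (mul_nonneg (sub_nonneg.2 hc) (sub_nonneg.2 (ha.trans ha')))

/-! ### Ancestors and the sets `T n` -/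

section Forest

variable {m : ℕ} {g r : ℕ → ℝ} {i k n z w : ℕ}

/-- The cost rate per unit of capacity of a machine type. -/
noncomputable def rate (g r : ℕ → ℝ) (i : ℕ) : ℝ := r i / g i

/-- The greatest element of `P k` which is at most `n`; it is `0` if there is none, that is, if
`n < k`. -/
noncomputable def lastAncestor (m : ℕ) (g r : ℕ → ℝ) (k n : ℕ) : ℕ :=
  Nat.findGreatest (· ∈ P m g r k) n

lemma p_mem_pset (h : pdef m g r i) : p m g r i ∈ pset m g r i := Nat.sInf_mem h

lemma p_le (hw : w ∈ pset m g r i) : p m g r i ≤ w := Nat.sInf_le hw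

lemma pdef_of_p_pos (h : 0 < p m g r i) : pdef m g r i := Nat.nonempty_of_pos_sInf h

lemma p_eq_zero (h : ¬ pdef m g r i) : p m g r i = 0 := by
  rw [p, Set.not_nonempty_iff_eq_empty.1 h, Nat.sInf_empty]

lemma lt_of_p_eq (hz : 1 ≤ z) (h : p m g r i = z) : i < z :=
  h ▸ (p_mem_pset (pdef_of_p_pos (h ▸ hz))).2.1

lemma self_mem_P : k ∈ P m g r k := Relation.ReflTransGen.refl

lemma P_trans (hi : i ∈ P m g r k) (hz : z ∈ P m g r i) : z ∈ P m g r k :=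
  Relation.ReflTransGen.trans hi hz

lemma p_mem_P (hi : i ∈ P m g r k) (h : pdef m g r i) : p m g r i ∈ P m g r k :=
  Relation.ReflTransGen.tail hi ⟨h, rfl⟩

lemma exists_mem_P_p_eq (hz : z ∈ P m g r k) (hne : k ≠ z) : ∃ i ∈ P m g r k, p m g r i = z := by
  rcases Relation.ReflTransGen.cases_tail hz with h | ⟨i, hi, -, h⟩
  · exact absurd h.symm hne
  · exact ⟨i, hi, h.symm⟩

lemma lastAncestor_mem_P (hkn : k ≤ n) : lastAncestor m g r k n ∈ P m g r k :=
  Nat.findGreatest_spec (P := (· ∈ P m g r k)) hkn self_mem_P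

lemma lastAncestor_le : lastAncestor m g r k n ≤ n := Nat.findGreatest_le n

lemma le_lastAncestor (hi : i ∈ P m g r k) (hin : i ≤ n) : i ≤ lastAncestor m g r k n :=
  Nat.le_findGreatest hin hi

lemma lastAncestor_eq_self (hn : n ∈ P m g r k) : lastAncestor m g r k n = n :=
  lastAncestor_le.antisymm (le_lastAncestor hn le_rfl)

lemma rate_lastAncestor_le (hkn : k ≤ n) (hn : n ≤ m) (hw : lastAncestor m g r k n < w)
    (hwn : w ≤ n) : rate g r (lastAncestor m g r k n) ≤ rate g r w := by
  by_contra! hlt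
  have hmem : w ∈ pset m g r (lastAncestor m g r k n) := ⟨hwn.trans hn, hw, hlt⟩
  have hp := p_mem_pset ⟨w, hmem⟩
  exact hp.2.1.not_ge
    (le_lastAncestor (p_mem_P (lastAncestor_mem_P hkn) ⟨w, hmem⟩) ((p_le hmem).trans hwn))

lemma mem_P_iff (hk : k ≤ m) :
    i ∈ P m g r k ↔ k ≤ i ∧ i ≤ m ∧ ∀ w, k ≤ w → w < i → rate g r i < rate g r w := by
  constructor
  · intro h
    change Relation.ReflTransGen (pstep m g r) k i at h
    induction h with
    | refl => exact ⟨le_rfl, hk, fun w hkw hwk => absurd hkw hwk.not_ge⟩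
    | @tail i b _ hib ih =>
      obtain ⟨hki, -, hrecord⟩ := ih
      obtain ⟨hdef, rfl⟩ := hib
      obtain ⟨hpm, hip, hlt⟩ := p_mem_pset hdef
      refine ⟨hki.trans hip.le, hpm, fun w hkw hwp => ?_⟩
      rcases lt_trichotomy w i with hwi | rfl | hiw
      · exact hlt.trans (hrecord w hkw hwi)
      · exact hlt
      · by_contra! hle
        exact hwp.not_ge (p_le ⟨hwp.le.trans hpm, hiw, hle.trans_lt hlt⟩)
  · rintro ⟨hki, him, hrecord⟩
    suffices h : lastAncestor m g r k i = i from h ▸ lastAncestor_mem_P hki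
    by_contra hne
    have hlt := lastAncestor_le.lt_of_ne hne
    exact (hrecord _ (le_lastAncestor self_mem_P hki) hlt).not_ge
      (rate_lastAncestor_le hki him hlt le_rfl)

lemma le_of_mem_P (hk : k ≤ m) (hi : i ∈ P m g r k) : k ≤ i := ((mem_P_iff hk).1 hi).1

lemma rate_le_rate_of_mem_P (hk : k ≤ m) (hi : i ∈ P m g r k) (hz : z ∈ P m g r k) (hiz : i ≤ z) :
    rate g r z ≤ rate g r i := by
  rcases hiz.eq_or_lt with rfl | h
  · exact le_rfl
  · exact (((mem_P_iff hk).1 hz).2.2 i (le_of_mem_P hk hi) h).le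

lemma mem_P_of_mem_P_of_le (hk : k ≤ m) (hz : z ∈ P m g r k) (hki : k ≤ i) (hiz : i ≤ z) :
    z ∈ P m g r i := by
  obtain ⟨-, hzm, hrecord⟩ := (mem_P_iff hk).1 hz
  exact (mem_P_iff (hiz.trans hzm)).2 ⟨hiz, hzm, fun w hw => hrecord w (hki.trans hw)⟩

lemma self_mem_A (hz : z ∈ Set.Icc 1 m) : z ∈ A m g r z := ⟨hz.1, hz.2, self_mem_P⟩

lemma mem_A_of_mem_A_of_le (hi : i ∈ A m g r z) (hiw : i ≤ w) (hwz : w ≤ z) : w ∈ A m g r z :=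
  ⟨hi.1.trans hiw, hwz.trans ((mem_P_iff hi.2.1).1 hi.2.2).2.1,
    mem_P_of_mem_P_of_le hi.2.1 hi.2.2 hiw hwz⟩

lemma lt_of_mem_P_lastAncestor (hkn : k ≤ n) (hn : n ≤ m)
    (hz : z ∈ P m g r (lastAncestor m g r k n)) (hne : z ≠ lastAncestor m g r k n) : n < z := by
  by_contra! hzn
  exact hne ((le_lastAncestor (P_trans (lastAncestor_mem_P hkn) hz) hzn).antisymm
    (le_of_mem_P (lastAncestor_le.trans hn) hz))

lemma rate_lastAncestor_le_rate_lastAncestor (hk : k ≤ m) (hkw : k ≤ w) (hwn : w ≤ n) :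
    rate g r (lastAncestor m g r k n) ≤ rate g r (lastAncestor m g r k w) :=
  rate_le_rate_of_mem_P hk (lastAncestor_mem_P hkw) (lastAncestor_mem_P (hkw.trans hwn))
    (le_lastAncestor (lastAncestor_mem_P hkw) (lastAncestor_le.trans hwn))

lemma lt_p_of_rate_le (hdef : pdef m g r i) (hmin : ∀ w, i < w → w ≤ k → rate g r i ≤ rate g r w) :
    k < p m g r i := by
  by_contra! hpk
  exact (p_mem_pset hdef).2.2.not_ge (hmin _ (p_mem_pset hdef).2.1 hpk)

lemma p_mem_P_of_rate_le (hik : i < k) (hk : k ≤ m) (hdef : pdef m g r i)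
    (hmin : ∀ w, i < w → w ≤ k → rate g r i ≤ rate g r w) : p m g r i ∈ P m g r k := by
  obtain ⟨hpm, -, hlt⟩ := p_mem_pset hdef
  refine (mem_P_iff hk).2 ⟨(lt_p_of_rate_le hdef hmin).le, hpm, fun w hkw hwp => ?_⟩
  by_contra! hle
  exact hwp.not_ge (p_le ⟨hwp.le.trans hpm, hik.trans_le hkw, hle.trans_lt hlt⟩)

lemma mem_T_of_rate_le (hi : 1 ≤ i) (hik : i ≤ k) (hk : k ≤ m)
    (hmin : ∀ w, i < w → w ≤ k → rate g r i ≤ rate g r w) : i ∈ T m g r k := by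
  rcases hik.eq_or_lt with rfl | hlt
  · exact Or.inl rfl
  suffices h : ∃ z ∈ P m g r k, p m g r z = p m g r i by
    obtain ⟨z, hz, hp⟩ := h
    exact Or.inr (Set.mem_biUnion hz
      ⟨hi, hik.trans hk, hlt.trans_le (le_of_mem_P hk hz), hp.symm⟩)
  by_cases hdef : pdef m g r i
  · exact exists_mem_P_p_eq (p_mem_P_of_rate_le hlt hk hdef hmin) (lt_p_of_rate_le hdef hmin).ne
  · refine ⟨lastAncestor m g r k m, lastAncestor_mem_P hk, ?_⟩
    rw [p_eq_zero hdef, p_eq_zero]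
    rintro ⟨w, hwm, hw, hlt⟩
    exact hlt.not_ge (rate_lastAncestor_le hk le_rfl hw hwm)

lemma mem_T_iff (hk : k ∈ Set.Icc 1 m) :
    i ∈ T m g r k ↔ 1 ≤ i ∧ i ≤ k ∧ ∀ w, i < w → w ≤ k → rate g r i ≤ rate g r w := by
  refine ⟨?_, fun ⟨hi, hik, hmin⟩ => mem_T_of_rate_le hi hik hk.2 hmin⟩
  rintro (rfl | h)
  · exact ⟨hk.1, le_rfl, fun w hiw hwi => absurd hiw hwi.not_gt⟩
  obtain ⟨z, hz, hi, -, hiz, hp⟩ := Set.mem_iUnion₂.1 h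
  obtain ⟨hkz, hzm, hrecord⟩ := (mem_P_iff hk.2).1 hz
  have hmin : ∀ w, i < w → w ≤ z → rate g r i ≤ rate g r w := by
    intro w hiw hwz
    by_contra! hlt
    have hmem : w ∈ pset m g r i := ⟨hwz.trans hzm, hiw, hlt⟩
    have hpos : 0 < p m g r z := hp ▸ (Nat.zero_le i).trans_lt (p_mem_pset ⟨w, hmem⟩).2.1
    exact ((p_le hmem).trans hwz).not_gt (hp ▸ (p_mem_pset (pdef_of_p_pos hpos)).2.1)
  refine ⟨hi, ?_, fun w hiw hwk => hmin w hiw (hwk.trans hkz)⟩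
  by_contra! hki
  exact (hrecord i hki.le hiz).not_ge (hmin z hiz le_rfl)

lemma rate_monotoneOn_T (hn : n ∈ Set.Icc 1 m) : MonotoneOn (rate g r) (T m g r n) := by
  intro i hi w hw hiw
  rcases hiw.eq_or_lt with rfl | h
  · exact le_rfl
  · exact ((mem_T_iff hn).1 hi).2.2 w h ((mem_T_iff hn).1 hw).2.1

lemma T_subset_T (hn : n ∈ Set.Icc 1 m) (hk : k ∈ T m g r n) : T m g r k ⊆ T m g r n := by
  intro i hi
  obtain ⟨hk1, hkn, hkmin⟩ := (mem_T_iff hn).1 hk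
  obtain ⟨hi1, hik, himin⟩ := (mem_T_iff ⟨hk1, hkn.trans hn.2⟩).1 hi
  refine (mem_T_iff hn).2 ⟨hi1, hik.trans hkn, fun w hiw hwn => ?_⟩
  rcases le_or_gt w k with hwk | hkw
  · exact himin w hiw hwk
  · refine le_trans ?_ (hkmin w hkw hwn)
    exact rate_monotoneOn_T ⟨hk1, hkn.trans hn.2⟩ hi (Or.inl rfl) hik

lemma mem_TIcc_iff (hn : n ∈ Set.Icc 1 m) : i ∈ TIcc m g r n ↔ i ∈ T m g r n := by
  simp only [TIcc, mem_filter, mem_insert, mem_Icc, and_iff_right_iff_imp]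
  intro hi
  obtain ⟨hi1, hin, -⟩ := (mem_T_iff hn).1 hi
  exact Or.inr ⟨hi1, hin.trans hn.2⟩

lemma lastAncestor_mem_T (hk : 1 ≤ k) (hkn : k ≤ n) (hn : n ≤ m) :
    lastAncestor m g r k n ∈ T m g r n :=
  mem_T_of_rate_le (hk.trans (le_lastAncestor self_mem_P hkn)) lastAncestor_le hn
    fun _ => rate_lastAncestor_le hkn hn

lemma idxT_eq_lastAncestor (hk : 1 ≤ k) (hkn : k ≤ n) (hn : n ≤ m) :
    idxT m g r n k = lastAncestor m g r k n := by
  obtain ⟨hT, -, -, hP⟩ : idxT m g r n k ∈ {i | i ∈ T m g r n ∧ k ∈ A m g r i} :=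
    Nat.sInf_mem ⟨_, lastAncestor_mem_T hk hkn hn, hk, hkn.trans hn, lastAncestor_mem_P hkn⟩
  obtain ⟨-, hle, hmin⟩ := (mem_T_iff ⟨hk.trans hkn, hn⟩).1 hT
  refine (le_lastAncestor hP hle).antisymm ?_
  by_contra! hlt
  exact (((mem_P_iff (hkn.trans hn)).1 (lastAncestor_mem_P hkn)).2.2 _
    (le_of_mem_P (hkn.trans hn) hP) hlt).not_ge (hmin _ hlt lastAncestor_le)

lemma eq_lastAncestor_of_p_eq (hk : k ≤ m) (hz : 1 ≤ z) (hi : i ∈ P m g r k)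
    (hp : p m g r i = z) : i = lastAncestor m g r k (z - 1) := by
  have hiz := lt_of_p_eq hz hp
  have hki := le_of_mem_P hk hi
  refine (le_lastAncestor hi (by omega)).antisymm ?_
  by_contra! hlt
  have hrecord := (mem_P_iff hk).1 (lastAncestor_mem_P (g := g) (r := r) (n := z - 1) (by omega))
  have hle := p_le (show _ ∈ pset m g r i from ⟨hrecord.2.1, hlt, hrecord.2.2 i hki hlt⟩)
  have := lastAncestor_le (m := m) (g := g) (r := r) (k := k) (n := z - 1)
  omega

lemma p_lastAncestor_pred (hk : k ∈ A m g r z) (hne : k ≠ z) :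
    p m g r (lastAncestor m g r k (z - 1)) = z := by
  obtain ⟨i, hi, hp⟩ := exists_mem_P_p_eq hk.2.2 hne
  rwa [← eq_lastAncestor_of_p_eq hk.2.1 (hk.1.trans (le_of_mem_P hk.2.1 hk.2.2)) hi hp]

lemma chil_eq_lastAncestor (hk : k ∈ A m g r z) (hne : k ≠ z) :
    chil m g r z k = lastAncestor m g r k (z - 1) := by
  obtain ⟨i, hi, hp⟩ := exists_mem_P_p_eq hk.2.2 hne
  have hmem : chil m g r z k ∈ {i | p m g r i = z ∧ k ∈ A m g r i} :=
    Nat.sInf_mem ⟨i, hp, hk.1, hk.2.1, hi⟩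
  exact eq_lastAncestor_of_p_eq hk.2.1 (hk.1.trans (le_of_mem_P hk.2.1 hk.2.2)) hmem.2.2.2 hmem.1

lemma rate_le_rate_lastAncestor_pred (hk : k ∈ A m g r z) (hne : k ≠ z) :
    rate g r z ≤ rate g r (lastAncestor m g r k (z - 1)) := by
  have hkz := le_of_mem_P hk.2.1 hk.2.2
  simpa only [lastAncestor_eq_self hk.2.2] using
    rate_lastAncestor_le_rate_lastAncestor (g := g) (r := r) hk.2.1
      (Nat.le_sub_one_of_lt (hkz.lt_of_ne hne)) z.pred_le

lemma mem_A_iff_of_p_eq (hz : 1 ≤ z) (hp : p m g r i = z) :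
    k ∈ A m g r i ↔ (k ∈ A m g r z ∧ k ≠ z) ∧ lastAncestor m g r k (z - 1) = i := by
  constructor
  · rintro ⟨hk1, hkm, hi⟩
    have hdef : pdef m g r i := pdef_of_p_pos (hp ▸ hz)
    have hne : k ≠ z := ((le_of_mem_P hkm hi).trans_lt (lt_of_p_eq hz hp)).ne
    exact ⟨⟨⟨hk1, hkm, hp ▸ p_mem_P hi hdef⟩, hne⟩, (eq_lastAncestor_of_p_eq hkm hz hi hp).symm⟩
  · rintro ⟨⟨⟨hk1, hkm, hz⟩, hne⟩, rfl⟩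
    have := le_of_mem_P hkm hz
    exact ⟨hk1, hkm, lastAncestor_mem_P (by omega)⟩

end Forest

/-! ### Configurations and `z⋄` -/

section Configuration

variable {ι : Type*} {m : ℕ} {g r : ℕ → ℝ} {s : ι → ℝ} {X Y : Finset ι} {J : ι} {c i n z : ℕ}

/-- The total size of the jobs in the trees rooted at the types `≥ i` of `T n`. -/
noncomputable def tailSize (m : ℕ) (g r : ℕ → ℝ) (s : ι → ℝ) (X : Finset ι) (n i : ℕ) : ℝ :=
  ∑ z ∈ TIcc m g r n with i ≤ z, SH m g r s X z

/-- The total capacity of the machines of the top type `n` in the configuration `cn n`. -/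
noncomputable def topCapacity (m : ℕ) (g r : ℕ → ℝ) (s : ι → ℝ) (X : Finset ι) (n : ℕ) : ℝ :=
  ⌈SH m g r s X n / g n⌉₊ * g n

/-- The total capacity of the machines of types `≥ i` in the configuration `cn n`. -/
noncomputable def tailCapacity (m : ℕ) (g r : ℕ → ℝ) (s : ι → ℝ) (X : Finset ι) (n i : ℕ) : ℝ :=
  ∑ z ∈ TIcc m g r n with i ≤ z, cn m g r s X n z * g z

lemma SH_nonneg (hs : ∀ J ∈ X, 0 ≤ s J) (z : ℕ) : 0 ≤ SH m g r s X z :=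
  sum_nonneg fun J hJ => hs J (mem_filter.1 hJ).1

lemma SH_mono (hXY : X ⊆ Y) (hs : ∀ J ∈ Y, 0 ≤ s J) (z : ℕ) : SH m g r s X z ≤ SH m g r s Y z :=
  sum_le_sum_of_subset_of_nonneg (filter_subset_filter _ hXY)
    fun J hJ _ => hs J (mem_filter.1 hJ).1

lemma le_SH (hs : ∀ J ∈ X, 0 ≤ s J) (hJ : J ∈ X) (hA : mty m g s J ∈ A m g r z) :
    s J ≤ SH m g r s X z :=
  single_le_sum (fun J' hJ' => hs J' (mem_filter.1 hJ').1) (mem_filter.2 ⟨hJ, hA⟩)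

lemma tailSize_mono (hn : n ∈ Set.Icc 1 m) (hc : c ∈ T m g r n) (hXY : X ⊆ Y)
    (hs : ∀ J ∈ Y, 0 ≤ s J) (i : ℕ) : tailSize m g r s X c i ≤ tailSize m g r s Y n i := by
  have hcm := (mem_T_iff hn).1 hc
  refine (sum_le_sum fun z _ => SH_mono hXY hs z).trans
    (sum_le_sum_of_subset_of_nonneg (filter_subset_filter _ fun z hz => ?_)
      fun z _ _ => SH_nonneg hs z)
  rw [mem_TIcc_iff ⟨hcm.1, hcm.2.1.trans hn.2⟩] at hz
  exact (mem_TIcc_iff hn).2 (T_subset_T hn hc hz)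

lemma tailSize_antitone (hs : ∀ J ∈ X, 0 ≤ s J) : Antitone (tailSize m g r s X n) :=
  fun _ _ hij => sum_le_sum_of_subset_of_nonneg
    (monotone_filter_right _ fun _ _ h => hij.trans h) fun z _ _ => SH_nonneg hs z

lemma SH_le_topCapacity (hg : 0 < g n) : SH m g r s X n ≤ topCapacity m g r s X n :=
  (div_le_iff₀ hg).1 (Nat.le_ceil _)

lemma topCapacity_le (hg : 0 < g n) (hs : ∀ J ∈ X, 0 ≤ s J) :
    topCapacity m g r s X n ≤ SH m g r s X n + g n := by
  have h := Nat.ceil_lt_add_one (div_nonneg (SH_nonneg (m := m) (g := g) (r := r) hs n) hg.le)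
  calc topCapacity m g r s X n ≤ (SH m g r s X n / g n + 1) * g n :=
        mul_le_mul_of_nonneg_right h.le hg.le
    _ = SH m g r s X n + g n := by field_simp

lemma topCapacity_nonneg (hg : 0 ≤ g n) : 0 ≤ topCapacity m g r s X n :=
  mul_nonneg (Nat.cast_nonneg _) hg

lemma topCapacity_mono (hg : 0 ≤ g n) (hXY : X ⊆ Y) (hs : ∀ J ∈ Y, 0 ≤ s J) :
    topCapacity m g r s X n ≤ topCapacity m g r s Y n :=
  mul_le_mul_of_nonneg_right
    (Nat.cast_le.2 (Nat.ceil_mono (div_le_div_of_nonneg_right (SH_mono hXY hs n) hg))) hg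

lemma cn_self_mul : cn m g r s X n n * g n = topCapacity m g r s X n := by
  simp [cn, topCapacity]

lemma cn_eq_zero (hi : i ∉ T m g r n) : cn m g r s X n i = 0 := by
  have hne : i ≠ n := fun h => hi (Or.inl h)
  simp only [cn, if_neg hne, if_neg hi]

lemma cn_mul_eq_max_sub_max (hs : ∀ J ∈ X, 0 ≤ s J) (hi : i ∈ TIcc m g r n) (hne : i ≠ n)
    (hg : 0 < g i) :
    cn m g r s X n i * g i = max (tailSize m g r s X n i) (topCapacity m g r s X n) -
      max (tailSize m g r s X n (i + 1)) (topCapacity m g r s X n) := by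
  have hadd : tailSize m g r s X n i = SH m g r s X i + tailSize m g r s X n (i + 1) := by
    rw [tailSize, sum_filter_le_eq_ite_add, if_pos hi, tailSize]
  have hle := tailSize_antitone (m := m) (g := g) (r := r) (n := n) hs i.le_succ
  have hcn : cn m g r s X n i =
      if tailSize m g r s X n (i + 1) ≤ topCapacity m g r s X n ∧
          topCapacity m g r s X n < tailSize m g r s X n i
      then (tailSize m g r s X n i - topCapacity m g r s X n) / g i
      else if topCapacity m g r s X n < tailSize m g r s X n (i + 1) then SH m g r s X i / g i
      else 0 := by
    simp only [cn, if_neg hne, if_pos (mem_filter.1 hi).2]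
    rfl
  rw [hcn]
  split_ifs with hboundary hbelow
  · rw [div_mul_cancel₀ _ hg.ne', max_eq_left hboundary.2.le, max_eq_right hboundary.1]
  · rw [div_mul_cancel₀ _ hg.ne', max_eq_left (hbelow.le.trans hle), max_eq_left hbelow.le]
    linarith
  · rw [not_lt] at hbelow
    have habove : tailSize m g r s X n i ≤ topCapacity m g r s X n :=
      not_lt.1 fun h => hboundary ⟨hbelow, h⟩
    rw [zero_mul, max_eq_right habove, max_eq_right hbelow, sub_self]

lemma tailCapacity_eq_max (hs : ∀ J ∈ X, 0 ≤ s J) (hg : ∀ i ∈ Set.Icc 1 m, 0 < g i)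
    (hn : n ∈ Set.Icc 1 m) (hin : i ≤ n) :
    tailCapacity m g r s X n i = max (tailSize m g r s X n i) (topCapacity m g r s X n) := by
  induction hin using Nat.decreasingInduction with
  | self =>
    have htop : {z ∈ TIcc m g r n | n ≤ z} = {n} := by
      ext z
      rw [mem_filter, mem_TIcc_iff hn, mem_singleton]
      refine ⟨fun h => ((mem_T_iff hn).1 h.1).2.1.antisymm h.2, ?_⟩
      rintro rfl
      exact ⟨Or.inl rfl, le_rfl⟩
    rw [tailCapacity, tailSize, htop, sum_singleton, sum_singleton, cn_self_mul,
      max_eq_right (SH_le_topCapacity (hg n hn))]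
  | of_succ i hin ih =>
    rw [tailCapacity] at ih
    rw [tailCapacity, sum_filter_le_eq_ite_add, ih]
    split_ifs with hi
    · have hi1 := ((mem_T_iff hn).1 ((mem_TIcc_iff hn).1 hi)).1
      rw [cn_mul_eq_max_sub_max hs hi hin.ne (hg i ⟨hi1, hin.le.trans hn.2⟩), sub_add_cancel]
    · rw [zero_add, tailSize, tailSize, sum_filter_le_eq_ite_add _ _ i, if_neg hi, zero_add]

lemma tailCapacity_mono (hXY : X ⊆ Y) (hs : ∀ J ∈ Y, 0 ≤ s J) (hg : ∀ i ∈ Set.Icc 1 m, 0 < g i)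
    (hn : n ∈ Set.Icc 1 m) (hc : c ∈ T m g r n)
    (htop : topCapacity m g r s X c ≤ tailCapacity m g r s Y n c) (hin : i ≤ n) :
    tailCapacity m g r s X c i ≤ tailCapacity m g r s Y n i := by
  obtain ⟨hc1, hcn, -⟩ := (mem_T_iff hn).1 hc
  have hcm : c ∈ Set.Icc 1 m := ⟨hc1, hcn.trans hn.2⟩
  rw [tailCapacity_eq_max hs hg hn hin]
  rcases le_or_gt i c with hic | hci
  · rw [tailCapacity_eq_max (fun J hJ => hs J (hXY hJ)) hg hcm hic]
    rw [tailCapacity_eq_max hs hg hn hcn] at htop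
    exact max_le ((tailSize_mono hn hc hXY hs i).trans (le_max_left _ _))
      (htop.trans (max_le_max_right _ (tailSize_antitone hs hic)))
  · have hempty : {z ∈ TIcc m g r c | i ≤ z} = ∅ := by
      refine filter_false_of_mem fun z hz => ?_
      exact (((mem_T_iff hcm).1 ((mem_TIcc_iff hcm).1 hz)).2.1.trans_lt hci).not_ge
    rw [tailCapacity, hempty, sum_empty]
    exact (topCapacity_nonneg (hg n hn).le).trans (le_max_right _ _)

lemma sum_TIcc_eq_sum_TIcc (hn : n ∈ Set.Icc 1 m) (hc : c ∈ T m g r n) (q : ℕ → Prop)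
    [DecidablePred q] (w : ℕ → ℝ) :
    ∑ z ∈ TIcc m g r c with q z, cn m g r s X c z * w z =
      ∑ z ∈ TIcc m g r n with q z, cn m g r s X c z * w z := by
  have hcm := (mem_T_iff hn).1 hc
  have hmem : ∀ z, z ∈ TIcc m g r c ↔ z ∈ T m g r c :=
    fun z => mem_TIcc_iff ⟨hcm.1, hcm.2.1.trans hn.2⟩
  refine sum_subset (filter_subset_filter _ fun z hz => ?_) fun z hzn hzc => ?_
  · exact (mem_TIcc_iff hn).2 (T_subset_T hn hc ((hmem z).1 hz))
  · rw [cn_eq_zero fun h => hzc (mem_filter.2 ⟨(hmem z).2 h, (mem_filter.1 hzn).2⟩), zero_mul]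

lemma sum_cn_mul_le_sum_cn_mul (hXY : X ⊆ Y) (hs : ∀ J ∈ Y, 0 ≤ s J)
    (hg : ∀ i ∈ Set.Icc 1 m, 0 < g i) (hrate : ∀ i ∈ Set.Icc 1 m, 0 ≤ rate g r i)
    (hn : n ∈ Set.Icc 1 m) (hc : c ∈ T m g r n) (hnz : n ≤ z)
    (htop : topCapacity m g r s X c ≤ tailCapacity m g r s Y n c) :
    ∑ i ∈ TIcc m g r c with i ∈ A m g r z, cn m g r s X c i * r i ≤
      ∑ i ∈ TIcc m g r n with i ∈ A m g r z, cn m g r s Y n i * r i := by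
  have hT : ∀ i ∈ TIcc m g r n, i ∈ T m g r n ∧ i ∈ Set.Icc 1 m ∧ i ≤ n := by
    intro i hi
    rw [mem_TIcc_iff hn] at hi
    obtain ⟨hi1, hin, -⟩ := (mem_T_iff hn).1 hi
    exact ⟨hi, ⟨hi1, hin.trans hn.2⟩, hin⟩
  have hcost : ∀ u : ℕ → ℝ, ∑ i ∈ TIcc m g r n with i ∈ A m g r z, u i * r i =
      ∑ i ∈ TIcc m g r n with i ∈ A m g r z, u i * g i * rate g r i := by
    refine fun u => sum_congr rfl fun i hi => ?_
    rw [rate, mul_assoc, mul_div_cancel₀ _ (hg i (hT i (mem_filter.1 hi).1).2.1).ne']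
  have htail : ∀ i ∈ A m g r z, {j ∈ {j ∈ TIcc m g r n | j ∈ A m g r z} | i ≤ j} =
      {j ∈ TIcc m g r n | i ≤ j} := by
    intro i hi
    rw [filter_filter]
    exact filter_congr fun j hj => and_iff_right_of_imp
      fun hij => mem_A_of_mem_A_of_le hi hij ((hT j hj).2.2.trans hnz)
  rw [sum_TIcc_eq_sum_TIcc hn hc, hcost, hcost]
  refine sum_mul_le_sum_mul_of_tail_sum_le
    ((rate_monotoneOn_T hn).mono fun i hi => (hT i (mem_filter.1 hi).1).1)
    (fun i hi => hrate i (hT i (mem_filter.1 hi).1).2.1) fun i hi => ?_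
  rw [mem_filter] at hi
  rw [htail i hi.2, ← sum_TIcc_eq_sum_TIcc hn hc]
  exact tailCapacity_mono hXY hs hg hn hc htop (hT i hi.1).2.2

lemma mty_mem_Icc (hm : 1 ≤ m) (hJ : s J ≤ g m) : mty m g s J ∈ Set.Icc 1 m :=
  have h : mty m g s J ∈ {z | 1 ≤ z ∧ z ≤ m ∧ s J ≤ g z} := Nat.sInf_mem ⟨m, hm, le_rfl, hJ⟩
  ⟨h.1, h.2.1⟩

lemma lt_size_of_lt_mty (hz : z ∈ Set.Icc 1 m) (h : z < mty m g s J) : g z < s J :=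
  not_le.1 fun hle => h.not_ge (Nat.sInf_le ⟨hz.1, hz.2, hle⟩)

lemma exists_mty_eq_k0f (hX : X.Nonempty) : ∃ J ∈ X, mty m g s J = k0f m g s X := by
  obtain ⟨J, hJ, h⟩ := exists_mem_eq_sup X hX (fun J => mty m g s J)
  exact ⟨J, hJ, h.symm⟩

lemma mty_le_k0f (hJ : J ∈ X) : mty m g s J ≤ k0f m g s X := le_sup (f := mty m g s) hJ

lemma k0f_mem_Icc (hm : 1 ≤ m) (hX : X.Nonempty) (hb : ∀ J ∈ X, s J ≤ g m) :
    k0f m g s X ∈ Set.Icc 1 m := by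
  obtain ⟨J, hJ, h⟩ := exists_mty_eq_k0f (m := m) (g := g) (s := s) hX
  exact h ▸ mty_mem_Icc hm (hb J hJ)

lemma isLeast_zdia (hk : k0f m g s X ≤ m) :
    IsLeast {z | z ∈ P m g r (k0f m g s X) ∧ decent m g r s X z} (zdia m g r s X) := by
  refine ⟨Nat.sInf_mem ⟨lastAncestor m g r (k0f m g s X) m, lastAncestor_mem_P hk,
    fun z hz hne => ?_⟩, fun _ => Nat.sInf_le⟩
  exact absurd (lt_of_mem_P_lastAncestor hk le_rfl hz hne)
    ((mem_P_iff lastAncestor_le).1 hz).2.1.not_gt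

lemma zdia_mem_Icc_k0f (hk : k0f m g s X ≤ m) : zdia m g r s X ∈ Set.Icc (k0f m g s X) m :=
  have h := (mem_P_iff hk).1 (isLeast_zdia hk).1.1
  ⟨h.1, h.2.1⟩

lemma zdia_mem_Icc (hm : 1 ≤ m) (hX : X.Nonempty) (hb : ∀ J ∈ X, s J ≤ g m) :
    zdia m g r s X ∈ Set.Icc 1 m :=
  have hk := k0f_mem_Icc hm hX hb
  Set.Icc_subset_Icc_left hk.1 (zdia_mem_Icc_k0f hk.2)

lemma mty_le_zdia (hm : 1 ≤ m) (hb : ∀ J ∈ X, s J ≤ g m) (hJ : J ∈ X) :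
    mty m g s J ≤ zdia m g r s X :=
  (mty_le_k0f hJ).trans (zdia_mem_Icc_k0f (k0f_mem_Icc hm ⟨J, hJ⟩ hb).2).1

/-- If `c < n`, a largest job of `Y` is too big for type `c`, so its size makes up for rounding up
the number of machines of type `c`. -/
lemma topCapacity_le_tailCapacity (hm : 1 ≤ m) (hXY : X ⊆ Y) (hY : Y.Nonempty)
    (hs : ∀ J ∈ Y, 0 ≤ s J) (hb : ∀ J ∈ Y, s J ≤ g m) (hg : ∀ i ∈ Set.Icc 1 m, 0 < g i)
    (hn : n ∈ P m g r (k0f m g s Y)) (hc : c ∈ T m g r n) :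
    topCapacity m g r s X c ≤ tailCapacity m g r s Y n c := by
  obtain ⟨hk1, hkm⟩ := k0f_mem_Icc hm hY hb
  obtain ⟨hkn, hnm, hrecord⟩ := (mem_P_iff hkm).1 hn
  have hn1m : n ∈ Set.Icc 1 m := ⟨hk1.trans hkn, hnm⟩
  obtain ⟨hc1, hcn, hmin⟩ := (mem_T_iff hn1m).1 hc
  have hc1m : c ∈ Set.Icc 1 m := ⟨hc1, hcn.trans hnm⟩
  rw [tailCapacity_eq_max hs hg hn1m hcn]
  rcases hcn.eq_or_lt with rfl | hlt
  · exact (topCapacity_mono (hg c hc1m).le hXY hs).trans (le_max_right _ _)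
  have hck : c < k0f m g s Y := by
    by_contra! hkc
    exact (hrecord c hkc hlt).not_ge (hmin n hlt le_rfl)
  obtain ⟨J, hJ, hJk⟩ := exists_mty_eq_k0f (m := m) (g := g) (s := s) hY
  have hgJ : g c < s J := lt_size_of_lt_mty hc1m (hJk ▸ hck)
  have hJn : s J ≤ SH m g r s Y n := le_SH hs hJ (hJk ▸ ⟨hk1, hkm, hn⟩)
  calc topCapacity m g r s X c ≤ SH m g r s X c + g c :=
        topCapacity_le (hg c hc1m) fun J hJ => hs J (hXY hJ)
    _ ≤ SH m g r s Y c + SH m g r s Y n :=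
        add_le_add (SH_mono hXY hs c) (hgJ.le.trans hJn)
    _ ≤ tailSize m g r s Y n c :=
        add_le_sum (fun z _ => SH_nonneg hs z)
          (mem_filter.2 ⟨(mem_TIcc_iff hn1m).2 hc, le_rfl⟩)
          (mem_filter.2 ⟨(mem_TIcc_iff hn1m).2 (Or.inl rfl), hcn⟩) hlt.ne
    _ ≤ max (tailSize m g r s Y n c) (topCapacity m g r s Y n) := le_max_left _ _

theorem zdia_mono (hm : 1 ≤ m) (hg : ∀ i ∈ Set.Icc 1 m, 0 < g i)
    (hrate : ∀ i ∈ Set.Icc 1 m, 0 ≤ rate g r i) (hXY : X ⊆ Y) (hX : X.Nonempty)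
    (hs : ∀ J ∈ Y, 0 ≤ s J) (hb : ∀ J ∈ Y, s J ≤ g m) :
    zdia m g r s X ≤ zdia m g r s Y := by
  have hkX := k0f_mem_Icc hm hX fun J hJ => hb J (hXY hJ)
  have hY := hX.mono hXY
  have hkY := (k0f_mem_Icc hm hY hb).2
  obtain ⟨hzP, hdecent⟩ := (isLeast_zdia (r := r) hkY).1
  have hz := zdia_mem_Icc (r := r) hm hY hb
  have hkXz : k0f m g s X ≤ zdia m g r s Y :=
    (sup_mono hXY).trans (zdia_mem_Icc_k0f hkY).1
  have hcT := lastAncestor_mem_T (g := g) (r := r) hkX.1 hkXz hz.2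
  refine ((isLeast_zdia hkX.2).2 ⟨lastAncestor_mem_P hkXz, fun zt hzt hne => ?_⟩).trans
    lastAncestor_le
  have hlt := lt_of_mem_P_lastAncestor hkXz hz.2 hzt hne
  exact (sum_cn_mul_le_sum_cn_mul hXY hs hg hrate hz hcT hlt.le
    (topCapacity_le_tailCapacity hm hXY hY hs hb hg hzP hcT)).trans
      (hdecent zt (mem_P_of_mem_P_of_le (lastAncestor_le.trans hz.2) hzt lastAncestor_le hlt.le)
        hlt.ne')

end Configuration

/-! ### Charged costs -/

section Charge

variable {ι : Type*} {m : ℕ} {g r : ℕ → ℝ} {s : ι → ℝ} {X Y : Finset ι} {J : ι} {z : ℕ}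

/-- The total size of the jobs of exact type `z`, which is `S(H^h(X))` for `z = z⋄(X)`. -/
noncomputable def exactSize (m : ℕ) (g : ℕ → ℝ) (s : ι → ℝ) (X : Finset ι) (z : ℕ) : ℝ :=
  Ssum s {J ∈ X | mty m g s J = z}

/-- The paper's cost `c` (at `z = z⋄(X)`): the jobs of exact type `z` are charged the rate of `z`,
and those in the tree of a child of `z` the rate of that child. -/
noncomputable def baseCost (m : ℕ) (g r : ℕ → ℝ) (s : ι → ℝ) (X : Finset ι) (z : ℕ) : ℝ :=
  exactSize m g s X z * rate g r z + ∑ i ∈ fchFin m g r z, SH m g r s X i * rate g r i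

/-- The paper's `α*`, with its denominator in the closed form of `sum_size_mul_rate_sub_rate`. It is
extended by `1` if the jobs of the tree fill a machine of type `z` and by `0` if `c ≤ r z`, so that
`charge_of_mem_A_of_ne` holds in all cases. -/
noncomputable def alphaStar (m : ℕ) (g r : ℕ → ℝ) (s : ι → ℝ) (X : Finset ι) (z : ℕ) : ℝ :=
  if g z ≤ SH m g r s X z then 1
  else if r z < baseCost m g r s X z then
    (baseCost m g r s X z - r z) / (baseCost m g r s X z - SH m g r s X z * rate g r z)
  else 0

/-- The paper's `β*`, extended by `0` to the cases in which it is undefined, so that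
`charge_of_mty_eq_zdia` holds in all cases. -/
noncomputable def betaStar (m : ℕ) (g r : ℕ → ℝ) (s : ι → ℝ) (X : Finset ι) (z : ℕ) : ℝ :=
  if SH m g r s X z < g z ∧ baseCost m g r s X z ≤ r z then
    (r z - baseCost m g r s X z) / (exactSize m g s X z * rate g r z)
  else 0

lemma exactSize_nonneg (hs : ∀ J ∈ X, 0 ≤ s J) : 0 ≤ exactSize m g s X z :=
  sum_nonneg fun J hJ => hs J (mem_filter.1 hJ).1

lemma exactSize_mono (hXY : X ⊆ Y) (hs : ∀ J ∈ Y, 0 ≤ s J) :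
    exactSize m g s X z ≤ exactSize m g s Y z :=
  sum_le_sum_of_subset_of_nonneg (filter_subset_filter _ hXY)
    fun J hJ _ => hs J (mem_filter.1 hJ).1

lemma le_exactSize (hs : ∀ J ∈ X, 0 ≤ s J) (hJ : J ∈ X) :
    s J ≤ exactSize m g s X (mty m g s J) :=
  single_le_sum (fun J' hJ' => hs J' (mem_filter.1 hJ').1) (mem_filter.2 ⟨hJ, rfl⟩)

lemma baseCost_mono (hXY : X ⊆ Y) (hs : ∀ J ∈ Y, 0 ≤ s J)
    (hrate : ∀ i ∈ Set.Icc 1 m, 0 ≤ rate g r i) (hz : z ∈ Set.Icc 1 m) :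
    baseCost m g r s X z ≤ baseCost m g r s Y z := by
  refine add_le_add (mul_le_mul_of_nonneg_right (exactSize_mono hXY hs) (hrate z hz))
    (sum_le_sum fun i hi => mul_le_mul_of_nonneg_right (SH_mono hXY hs i) (hrate i ?_))
  exact mem_Icc.1 (mem_filter.1 hi).1

lemma SH_eq_exactSize_add_sum (hz : z ∈ Set.Icc 1 m) :
    SH m g r s X z = exactSize m g s X z + ∑ i ∈ fchFin m g r z, SH m g r s X i := by
  have hexact : {J ∈ H m g r s z X | mty m g s J = z} = {J ∈ X | mty m g s J = z} := by
    rw [H, filter_filter]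
    exact filter_congr fun J _ => and_iff_right_of_imp fun h => h ▸ self_mem_A (h ▸ hz)
  have hmaps : ∀ J ∈ {J ∈ H m g r s z X | mty m g s J ≠ z},
      lastAncestor m g r (mty m g s J) (z - 1) ∈ fchFin m g r z := by
    intro J hJ
    simp only [H, mem_filter] at hJ
    have hp := p_lastAncestor_pred hJ.1.2 hJ.2
    have hlt := lt_of_p_eq hz.1 hp
    have hle := le_of_mem_P hJ.1.2.2.1 hJ.1.2.2.2
    have hlast := le_lastAncestor (m := m) (g := g) (r := r) (k := mty m g s J) (n := z - 1)
      self_mem_P (Nat.le_sub_one_of_lt (hle.lt_of_ne hJ.2))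
    exact mem_filter.2 ⟨mem_Icc.2 ⟨hJ.1.2.1.trans hlast, hlt.le.trans hz.2⟩, hp⟩
  rw [SH, Ssum, ← sum_filter_add_sum_filter_not _ (fun J => mty m g s J = z), hexact,
    ← sum_fiberwise_of_maps_to hmaps]
  refine congrArg₂ _ rfl (sum_congr rfl fun i hi => ?_)
  rw [SH, Ssum, H, H, filter_filter, filter_filter]
  refine sum_congr (filter_congr fun J _ => ?_) fun _ _ => rfl
  rw [mem_A_iff_of_p_eq hz.1 (mem_filter.1 hi).2, and_assoc]

lemma sum_size_mul_rate_sub_rate (hz : z ∈ Set.Icc 1 m) :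
    ∑ i ∈ fchFin m g r z, ∑ J ∈ H m g r s i X, s J * (rate g r i - rate g r z) =
      baseCost m g r s X z - SH m g r s X z * rate g r z := by
  rw [SH_eq_exactSize_add_sum hz, baseCost, add_mul, add_sub_add_left_eq_sub, sum_mul,
    ← sum_sub_distrib]
  refine sum_congr rfl fun i _ => ?_
  rw [← sum_mul, mul_sub, SH, Ssum]

lemma SH_mul_rate_le (hg : 0 < g z) (hrate : 0 ≤ rate g r z) (h : SH m g r s X z ≤ g z) :
    SH m g r s X z * rate g r z ≤ r z :=
  (mul_le_mul_of_nonneg_right h hrate).trans_eq (mul_div_cancel₀ _ hg.ne')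

lemma alphaStar_nonneg (hg : 0 < g z) (hrate : 0 ≤ rate g r z) : 0 ≤ alphaStar m g r s X z := by
  rw [alphaStar]
  split_ifs with hfull hc
  · exact zero_le_one
  · have := SH_mul_rate_le hg hrate (not_le.1 hfull).le
    exact div_nonneg (by linarith) (by linarith)
  · exact le_rfl

lemma alphaStar_le_one (hg : 0 < g z) (hrate : 0 ≤ rate g r z) : alphaStar m g r s X z ≤ 1 := by
  rw [alphaStar]
  split_ifs with hfull hc
  · exact le_rfl
  · have := SH_mul_rate_le hg hrate (not_le.1 hfull).le
    exact div_le_one_of_le₀ (by linarith) (by linarith)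
  · exact zero_le_one

lemma alphaStar_mono (hXY : X ⊆ Y) (hs : ∀ J ∈ Y, 0 ≤ s J) (hg : ∀ i ∈ Set.Icc 1 m, 0 < g i)
    (hrate : ∀ i ∈ Set.Icc 1 m, 0 ≤ rate g r i) (hz : z ∈ Set.Icc 1 m) :
    alphaStar m g r s X z ≤ alphaStar m g r s Y z := by
  rcases le_or_gt (g z) (SH m g r s Y z) with hfull | hY
  · rw [alphaStar.eq_def m g r s Y, if_pos hfull]
    exact alphaStar_le_one (hg z hz) (hrate z hz)
  have hX := (SH_mono (g := g) (r := r) hXY hs z).trans_lt hY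
  rcases le_or_gt (baseCost m g r s X z) (r z) with hcX | hcX
  · rw [alphaStar, if_neg hX.not_ge, if_neg hcX.not_gt]
    exact alphaStar_nonneg (hg z hz) (hrate z hz)
  have hc := baseCost_mono hXY hs hrate hz
  rw [alphaStar, alphaStar, if_neg hX.not_ge, if_neg hY.not_ge, if_pos hcX,
    if_pos (hcX.trans_le hc)]
  exact sub_div_sub_le_sub_div_sub (mul_le_mul_of_nonneg_right (SH_mono hXY hs z) (hrate z hz))
    (SH_mul_rate_le (hg z hz) (hrate z hz) hY.le) hcX hc

lemma betaStar_nonneg (hs : ∀ J ∈ X, 0 ≤ s J) (hrate : 0 ≤ rate g r z) :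
    0 ≤ betaStar m g r s X z := by
  rw [betaStar]
  split_ifs with h
  · exact div_nonneg (sub_nonneg.2 h.2) (mul_nonneg (exactSize_nonneg hs) hrate)
  · exact le_rfl

lemma betaStar_anti (hXY : X ⊆ Y) (hs : ∀ J ∈ Y, 0 ≤ s J)
    (hrate : ∀ i ∈ Set.Icc 1 m, 0 < rate g r i) (hz : z ∈ Set.Icc 1 m)
    (hE : 0 < exactSize m g s X z) : betaStar m g r s Y z ≤ betaStar m g r s X z := by
  have hc := baseCost_mono hXY hs (fun i hi => (hrate i hi).le) hz
  by_cases hY : SH m g r s Y z < g z ∧ baseCost m g r s Y z ≤ r z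
  · have hX : SH m g r s X z < g z ∧ baseCost m g r s X z ≤ r z :=
      ⟨(SH_mono hXY hs z).trans_lt hY.1, hc.trans hY.2⟩
    rw [betaStar, betaStar, if_pos hX, if_pos hY]
    exact div_le_div₀ (sub_nonneg.2 hX.2) (sub_le_sub_left hc _) (mul_pos hE (hrate z hz))
      (mul_le_mul_of_nonneg_right (exactSize_mono hXY hs) (hrate z hz).le)
  · rw [betaStar, if_neg hY]
    exact betaStar_nonneg (fun J hJ => hs J (hXY hJ)) (hrate z hz).le

lemma charge_of_not_mem_A (hA : mty m g s J ∉ A m g r (zdia m g r s X))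
    (hk : 1 ≤ mty m g s J) (hkz : mty m g s J ≤ zdia m g r s X) (hz : zdia m g r s X ≤ m) :
    charge m g r s X J = s J * rate g r (lastAncestor m g r (mty m g s J) (zdia m g r s X)) := by
  simp only [charge, if_neg hA, idxT_eq_lastAncestor hk hkz hz, rate]

lemma charge_of_mty_eq_zdia (hz : zdia m g r s X ∈ Set.Icc 1 m)
    (hJ : mty m g s J = zdia m g r s X) :
    charge m g r s X J =
      s J * rate g r (zdia m g r s X) * (1 + betaStar m g r s X (zdia m g r s X)) := by
  simp only [charge, hJ, if_pos (self_mem_A hz), if_true, betaStar, baseCost, exactSize, rate,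
    ← not_le, ite_and]
  split_ifs <;> simp

lemma charge_of_mem_A_of_ne (hA : mty m g s J ∈ A m g r (zdia m g r s X))
    (hz : zdia m g r s X ∈ Set.Icc 1 m) (hne : mty m g s J ≠ zdia m g r s X) :
    charge m g r s X J =
      s J * (rate g r (lastAncestor m g r (mty m g s J) (zdia m g r s X - 1)) -
        (rate g r (lastAncestor m g r (mty m g s J) (zdia m g r s X - 1)) -
          rate g r (zdia m g r s X)) * alphaStar m g r s X (zdia m g r s X)) := by
  rw [alphaStar, ← sum_size_mul_rate_sub_rate hz]
  simp only [charge, if_pos hA, if_neg hne, chil_eq_lastAncestor hA hne, baseCost, exactSize, rate]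
  split_ifs <;> simp [*]

lemma size_mul_rate_lastAncestor_le_charge (hm : 1 ≤ m) (hg : ∀ i ∈ Set.Icc 1 m, 0 < g i)
    (hrate : ∀ i ∈ Set.Icc 1 m, 0 ≤ rate g r i) (hs : ∀ J ∈ X, 0 ≤ s J) (hb : ∀ J ∈ X, s J ≤ g m)
    (hJ : J ∈ X) :
    s J * rate g r (lastAncestor m g r (mty m g s J) (zdia m g r s X)) ≤ charge m g r s X J := by
  have hz := zdia_mem_Icc (r := r) hm ⟨J, hJ⟩ hb
  by_cases hA : mty m g s J ∈ A m g r (zdia m g r s X)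
  · rw [lastAncestor_eq_self hA.2.2]
    rcases eq_or_ne (mty m g s J) (zdia m g r s X) with heq | hne
    · rw [charge_of_mty_eq_zdia hz heq]
      exact le_mul_of_one_le_right (mul_nonneg (hs J hJ) (hrate _ hz))
        (le_add_of_nonneg_right (betaStar_nonneg hs (hrate _ hz)))
    · rw [charge_of_mem_A_of_ne hA hz hne]
      refine mul_le_mul_of_nonneg_left ?_ (hs J hJ)
      rw [le_sub_comm]
      exact mul_le_of_le_one_right (sub_nonneg.2 (rate_le_rate_lastAncestor_pred hA hne))
        (alphaStar_le_one (hg _ hz) (hrate _ hz))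
  · exact (charge_of_not_mem_A hA (mty_mem_Icc hm (hb J hJ)).1 (mty_le_zdia hm hb hJ) hz.2).ge

lemma charge_le_size_mul_rate_lastAncestor_pred (hm : 1 ≤ m) (hg : ∀ i ∈ Set.Icc 1 m, 0 < g i)
    (hrate : ∀ i ∈ Set.Icc 1 m, 0 ≤ rate g r i) (hs : ∀ J ∈ X, 0 ≤ s J) (hb : ∀ J ∈ X, s J ≤ g m)
    (hJ : J ∈ X) (hne : mty m g s J ≠ zdia m g r s X) :
    charge m g r s X J ≤
      s J * rate g r (lastAncestor m g r (mty m g s J) (zdia m g r s X - 1)) := by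
  have hz := zdia_mem_Icc (r := r) hm ⟨J, hJ⟩ hb
  have hk := mty_mem_Icc hm (hb J hJ)
  have hkz := mty_le_zdia (r := r) hm hb hJ
  by_cases hA : mty m g s J ∈ A m g r (zdia m g r s X)
  · rw [charge_of_mem_A_of_ne hA hz hne]
    exact mul_le_mul_of_nonneg_left (sub_le_self _ (mul_nonneg
      (sub_nonneg.2 (rate_le_rate_lastAncestor_pred hA hne))
      (alphaStar_nonneg (hg _ hz) (hrate _ hz)))) (hs J hJ)
  · rw [charge_of_not_mem_A hA hk.1 hkz hz.2]
    exact mul_le_mul_of_nonneg_left (rate_lastAncestor_le_rate_lastAncestor hk.2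
      (Nat.le_sub_one_of_lt (hkz.lt_of_ne hne)) (Nat.sub_le _ _)) (hs J hJ)

lemma charge_le_charge_of_zdia_lt (hm : 1 ≤ m) (hg : ∀ i ∈ Set.Icc 1 m, 0 < g i)
    (hrate : ∀ i ∈ Set.Icc 1 m, 0 ≤ rate g r i) (hXY : X ⊆ Y) (hs : ∀ J ∈ Y, 0 ≤ s J)
    (hb : ∀ J ∈ Y, s J ≤ g m) (hJ : J ∈ X) (hlt : zdia m g r s X < zdia m g r s Y) :
    charge m g r s Y J ≤ charge m g r s X J := by
  have hbX : ∀ J ∈ X, s J ≤ g m := fun J hJ => hb J (hXY hJ)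
  have hkz := mty_le_zdia (r := r) hm hbX hJ
  calc charge m g r s Y J
      ≤ s J * rate g r (lastAncestor m g r (mty m g s J) (zdia m g r s Y - 1)) :=
        charge_le_size_mul_rate_lastAncestor_pred hm hg hrate hs hb (hXY hJ) (hkz.trans_lt hlt).ne
    _ ≤ s J * rate g r (lastAncestor m g r (mty m g s J) (zdia m g r s X)) :=
        mul_le_mul_of_nonneg_left (rate_lastAncestor_le_rate_lastAncestor
          (mty_mem_Icc hm (hbX J hJ)).2 hkz (Nat.le_sub_one_of_lt hlt)) (hs J (hXY hJ))
    _ ≤ charge m g r s X J :=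
        size_mul_rate_lastAncestor_le_charge hm hg hrate (fun J hJ => hs J (hXY hJ)) hbX hJ

lemma charge_le_charge_of_zdia_eq (hm : 1 ≤ m) (hg : ∀ i ∈ Set.Icc 1 m, 0 < g i)
    (hrate : ∀ i ∈ Set.Icc 1 m, 0 < rate g r i) (hXY : X ⊆ Y) (hs : ∀ J ∈ Y, 0 < s J)
    (hb : ∀ J ∈ Y, s J ≤ g m) (hJ : J ∈ X) (heq : zdia m g r s X = zdia m g r s Y) :
    charge m g r s Y J ≤ charge m g r s X J := by
  have hs' : ∀ J ∈ Y, 0 ≤ s J := fun J hJ => (hs J hJ).le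
  have hrate' : ∀ i ∈ Set.Icc 1 m, 0 ≤ rate g r i := fun i hi => (hrate i hi).le
  have hsJ := hs J (hXY hJ)
  have hzY := zdia_mem_Icc (r := r) hm ⟨J, hXY hJ⟩ hb
  have hzX : zdia m g r s X ∈ Set.Icc 1 m := heq ▸ hzY
  by_cases hA : mty m g s J ∈ A m g r (zdia m g r s X)
  · rcases eq_or_ne (mty m g s J) (zdia m g r s X) with hJz | hne
    · have hE : 0 < exactSize m g s X (zdia m g r s X) :=
        hJz ▸ hsJ.trans_le (le_exactSize (fun J hJ => hs' J (hXY hJ)) hJ)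
      rw [charge_of_mty_eq_zdia hzX hJz, charge_of_mty_eq_zdia hzY (hJz.trans heq), ← heq]
      exact mul_le_mul_of_nonneg_left
        (add_le_add_right (betaStar_anti hXY hs' hrate hzX hE) 1)
        (mul_nonneg hsJ.le (hrate' _ hzX))
    · rw [charge_of_mem_A_of_ne hA hzX hne,
        charge_of_mem_A_of_ne (heq ▸ hA) hzY (heq ▸ hne), ← heq]
      exact mul_le_mul_of_nonneg_left (sub_le_sub_left (mul_le_mul_of_nonneg_left
        (alphaStar_mono hXY hs' hg hrate' hzX)
        (sub_nonneg.2 (rate_le_rate_lastAncestor_pred hA hne))) _) hsJ.le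
  · have hk := (mty_mem_Icc hm (hb J (hXY hJ))).1
    have hkz := mty_le_zdia (r := r) hm hb (hXY hJ)
    rw [charge_of_not_mem_A hA hk (heq ▸ hkz) hzX.2,
      charge_of_not_mem_A (heq ▸ hA) hk hkz hzY.2, heq]

end Charge

theorem statement_12_general {ι : Type*} {m : ℕ} {g r : ℕ → ℝ} {s : ι → ℝ} {X Y : Finset ι}
    (hm : 1 ≤ m) (hg : ∀ i ∈ Set.Icc 1 m, 0 < g i) (hr : ∀ i ∈ Set.Icc 1 m, 0 < r i)
    (hXY : X ⊆ Y) (hs : ∀ J ∈ Y, 0 < s J ∧ s J ≤ g m) {J : ι} (hJ : J ∈ X) :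
    charge m g r s Y J ≤ charge m g r s X J := by
  have hrate : ∀ i ∈ Set.Icc 1 m, 0 < rate g r i := fun i hi => div_pos (hr i hi) (hg i hi)
  have hrate' : ∀ i ∈ Set.Icc 1 m, 0 ≤ rate g r i := fun i hi => (hrate i hi).le
  have hpos : ∀ J ∈ Y, 0 < s J := fun J hJ => (hs J hJ).1
  have hnonneg : ∀ J ∈ Y, 0 ≤ s J := fun J hJ => (hpos J hJ).le
  have hb : ∀ J ∈ Y, s J ≤ g m := fun J hJ => (hs J hJ).2
  rcases (zdia_mono hm hg hrate' hXY ⟨J, hJ⟩ hnonneg hb).eq_or_lt with heq | hlt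
  · exact charge_le_charge_of_zdia_eq hm hg hrate hXY hpos hb hJ heq
  · exact charge_le_charge_of_zdia_lt hm hg hrate' hXY hnonneg hb hJ hlt

/-- Let `X ⊆ Y` be nonempty finite sets of jobs with sizes in
`(0, g m]`.  Then for every job `J ∈ X`, `r̃(X)(J) ≥ r̃(Y)(J)`: the cost charged
to each job is non-increasing as the job set expands. -/
theorem statement_12 {ι : Type*} (m : ℕ) (g r : ℕ → ℝ) (s : ι → ℝ)
    (X Y : Finset ι)
    (hm : 1 ≤ m)
    (hg1 : 0 < g 1) (hr1 : 0 < r 1)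
    (hg : ∀ i j, 1 ≤ i → i < j → j ≤ m → g i < g j)
    (hr : ∀ i j, 1 ≤ i → i < j → j ≤ m → r i < r j)
    (hXY : X ⊆ Y) (hX : X.Nonempty) (hY : Y.Nonempty)
    (hs : ∀ J ∈ Y, 0 < s J ∧ s J ≤ g m) :
    ∀ J ∈ X, charge m g r s Y J ≤ charge m g r s X J := by
  intro J hJ
  exact statement_12_general hm (pos_of_forall_lt hg1 hg) (pos_of_forall_lt hr1 hr) hXY hs hJ

end BSHM
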